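/- Let L be recognized by a parity automaton with costs A over Σ_I × Σ_O with n states and k colors, where Ω(Q) contains both an even and an odd color, and let f be the constant delay function with f(0) = 2^{2n⁴k²+1}. Then the following are equivalent: (1) Player I wins Γ_f(L(A)); (2) Player I wins Γ_{f'}(L(A)) for every delay function f'. -/

import Mathlib

attribute [local instance] Classical.propDecidable

noncomputable section

/-- A parity automaton with costs `(Q, A, qI, δ, Ω, Cst)`.
`Cst q a = true` means that the transition `(q, a, δ q a)` is an increment-transition,
`Cst q a = false` means it is an `ε`-transition. -/
structure PACost (Q : Type) (A : Type) where
  qI : Q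
  δ : Q → A → Q
  Ω : Q → ℕ
  Cst : Q → A → Bool

namespace PACost

variable {Q A : Type}

/-- The state reached after processing the first `n` letters of `w` starting in `q0`. -/
def stateAt (M : PACost Q A) (q0 : Q) (w : ℕ → A) : ℕ → Q
  | 0 => q0
  | n + 1 => M.δ (stateAt M q0 w n) (w n)

/-- The cost (number of increment-transitions) of the run infix between positions `m` and `n`. -/
def segCost (M : PACost Q A) (q0 : Q) (w : ℕ → A) (m n : ℕ) : ℕ :=
  ((Finset.Ico m n).filter fun j => M.Cst (stateAt M q0 w j) (w j) = true).card

/-- `Ans c`: the set of even colors of `M` that are larger than `c`. -/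
def Ans (M : PACost Q A) (c : ℕ) : Set ℕ :=
  { c' | (∃ q, M.Ω q = c') ∧ c < c' ∧ Even c' }

/-- The cost-of-response at position `n` of the run of `M` on `w` starting in `q0`. -/
def Cor (M : PACost Q A) (q0 : Q) (w : ℕ → A) (n : ℕ) : ℕ∞ :=
  if Even (M.Ω (stateAt M q0 w n)) then 0
  else
    sInf { c : ℕ∞ | ∃ n', n < n' ∧
      M.Ω (stateAt M q0 w n') ∈ M.Ans (M.Ω (stateAt M q0 w n)) ∧
      c = (segCost M q0 w n n' : ℕ∞) }

/-- The run of `M` on `w` starting in `q0` satisfies the parity condition with costs. -/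
def Accepting (M : PACost Q A) (q0 : Q) (w : ℕ → A) : Prop :=
  Filter.limsup (fun n => Cor M q0 w n) Filter.atTop < ⊤

/-- The language of `M`. -/
def Lang (M : PACost Q A) : Set (ℕ → A) := { w | Accepting M M.qI w }

/-- `M` is a finitary Büchi automaton: every transition is an increment-transition and
all colors are `1` or `2`. -/
def FinBuchi (M : PACost Q A) : Prop :=
  (∀ q a, M.Cst q a = true) ∧ ∀ q, M.Ω q = 1 ∨ M.Ω q = 2

end PACost

/-- The finite segment `w m, w (m+1), …, w (n-1)` of an infinite word `w`. -/
def seg {A : Type} (w : ℕ → A) (m n : ℕ) : List A :=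
  (List.range (n - m)).map fun i => w (m + i)

section DelayGames

variable {I O : Type}

/-- The `n`-th letter of the concatenation `u 0 ++ u 1 ++ u 2 ++ ⋯`
(well-defined whenever all blocks are non-empty). -/
def flatWord [Inhabited I] (u : ℕ → List I) (n : ℕ) : I :=
  (((List.range (n + 1)).map u).flatten).getD n default

/-- A delay function maps every round to a positive number of letters. -/
def DelayFn (f : ℕ → ℕ) : Prop := ∀ i, 0 < f i

/-- The constant delay function `f_k` with `f_k 0 = k + 1` and `f_k i = 1` for `i > 0`. -/
def constDF (k : ℕ) : ℕ → ℕ := fun i => if i = 0 then k + 1 else 1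

/-- The sequence of letters Player I has produced up to (and including) round `i`. -/
def oHist (u : ℕ → List I) (i : ℕ) : List I := ((List.range (i + 1)).map u).flatten

/-- `τO` is a winning strategy for Player O in the delay game with delay function `f`
and winning condition `L`. -/
def OWinning [Inhabited I] (f : ℕ → ℕ) (L : Set (ℕ → I × O)) (τO : List I → O) : Prop :=
  ∀ u : ℕ → List I, ∀ v : ℕ → O,
    (∀ i, (u i).length = f i) →
    (∀ i, v i = τO (oHist u i)) →
    (fun n => (flatWord u n, v n)) ∈ L

/-- Player O wins the delay game `Γ_f(L)`. -/
def OWins [Inhabited I] (f : ℕ → ℕ) (L : Set (ℕ → I × O)) : Prop :=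
  ∃ τO : List I → O, OWinning f L τO

/-- `τI` is a winning strategy for Player I in the delay game with delay function `f`
and winning condition `L`. -/
def IWinning [Inhabited I] (f : ℕ → ℕ) (L : Set (ℕ → I × O)) (τI : List O → List I) : Prop :=
  (∀ w, (τI w).length = f w.length) ∧
  ∀ u : ℕ → List I, ∀ v : ℕ → O,
    (∀ i, u i = τI ((List.range i).map v)) →
    (fun n => (flatWord u n, v n)) ∉ L

/-- Player I wins the delay game `Γ_f(L)`. -/
def IWins [Inhabited I] (f : ℕ → ℕ) (L : Set (ℕ → I × O)) : Prop :=
  ∃ τI : List O → List I, IWinning f L τI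

/-- The cost of a strategy `τO` of Player O: the supremum of the word-costs `wc` of the
outcomes of plays consistent with `τO`. -/
def stratCost [Inhabited I] (wc : (ℕ → I × O) → ℕ∞) (f : ℕ → ℕ) (τO : List I → O) : ℕ∞ :=
  ⨆ (u : ℕ → List I) (v : ℕ → O)
    (_ : (∀ i, (u i).length = f i) ∧ ∀ i, v i = τO (oHist u i)),
    wc (fun n => (flatWord u n, v n))

/-- An optimal winning strategy for Player O in `Γ_f(L)` exists and has cost `c`. -/
def OptimalCostIs [Inhabited I] (L : Set (ℕ → I × O)) (wc : (ℕ → I × O) → ℕ∞)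
    (f : ℕ → ℕ) (c : ℕ∞) : Prop :=
  (∃ τO, OWinning f L τO ∧ stratCost wc f τO = c) ∧
  ∀ τO, OWinning f L τO → c ≤ stratCost wc f τO

end DelayGames

/-!
For the acceptance of a run, a block only matters through its summary: its last state, its largest
even color, its largest unanswered request and whether it has positive cost. If two runs have the
same sequence of summaries and the blocks of the first have length at most `d`, then the first is
accepting whenever the second is: the cost of a response grows by a factor of at most `d`, up to the
two blocks at its ends.

Before Player O answers it, a block of Player I only matters through its profile, the set of
summaries that Player O can choose from. By the pigeonhole principle, every word of length at least
`2 ^ (2 * n ^ 2 * (k + 1) ^ 2)` has the same profile as arbitrarily long words. Two blocks of this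
length are thus a sufficient lookahead: to win with an arbitrary delay function, Player I simulates
a play with this lookahead, replaces each of his blocks there by a sufficiently long word with the
same profile, and translates the answers of Player O back into answers with the same summaries.
-/

section Words

variable {A B : Type}

theorem length_seg (w : ℕ → A) (m n : ℕ) : (seg w m n).length = n - m := by simp [seg]

theorem seg_append_seg (w : ℕ → A) {m n p : ℕ} (hmn : m ≤ n) (hnp : n ≤ p) :
    seg w m n ++ seg w n p = seg w m p := by
  obtain ⟨k, rfl⟩ := Nat.exists_eq_add_of_le hmn
  obtain ⟨l, rfl⟩ := Nat.exists_eq_add_of_le hnp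
  have hlength : m + k + l - m = k + l := by omega
  simp only [seg, Nat.add_sub_cancel_left, hlength, List.range_add, List.map_append, List.map_map]
  simp only [Function.comp_def, add_assoc]

theorem seg_succ (w : ℕ → A) {m n : ℕ} (h : m ≤ n) : seg w m (n + 1) = seg w m n ++ [w n] := by
  rw [← seg_append_seg w h n.le_succ]
  simp [seg]

theorem seg_congr {w w' : ℕ → A} {m n : ℕ} (h : Set.EqOn w w' (Set.Ico m n)) :
    seg w m n = seg w' m n :=
  List.map_congr_left fun i hi =>
    h ⟨Nat.le_add_right m i, Nat.add_lt_of_lt_sub' (List.mem_range.1 hi)⟩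

theorem getD_seg_zero (w : ℕ → A) {i n : ℕ} (h : i < n) (a : A) : (seg w 0 n).getD i a = w i := by
  simp [seg, List.getD, h]

theorem zip_seg (a : ℕ → A) (b : ℕ → B) (m n : ℕ) :
    (seg a m n).zip (seg b m n) = seg (fun i => (a i, b i)) m n :=
  List.zip_map' ..

/-- The infinite word starting with `x` and continuing with the default letter. -/
def padWord [Inhabited A] (x : List A) : ℕ → A := fun i => x.getD i default

theorem padWord_seg_eqOn [Inhabited A] (w : ℕ → A) (n : ℕ) :
    Set.EqOn (padWord (seg w 0 n)) w (Set.Iio n) :=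
  fun _ hi => getD_seg_zero w hi default

theorem exists_mem_Ico_succ {N : ℕ → ℕ} (h0 : N 0 = 0) (hN : StrictMono N) (m : ℕ) :
    ∃ j, N j ≤ m ∧ m < N (j + 1) := by
  have hm : m ∈ ⋃ j, Set.Ico (N j) (N (Order.succ j)) := by
    rw [iUnion_Ico_map_succ_eq_Ici (fun j => hN.monotone bot_le)
      hN.not_bddAbove_range_of_wellFoundedLT]
    simp [h0]
  simpa using hm

/-- The position of the first letter of the `n`-th block in `u 0 ++ u 1 ++ u 2 ++ ⋯`. -/
def blockStart (u : ℕ → List A) (n : ℕ) : ℕ := ∑ i ∈ Finset.range n, (u i).length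

theorem blockStart_succ (u : ℕ → List A) (n : ℕ) :
    blockStart u (n + 1) = blockStart u n + (u n).length :=
  Finset.sum_range_succ ..

theorem blockStart_strictMono {u : ℕ → List A} (hu : ∀ n, u n ≠ []) : StrictMono (blockStart u) :=
  strictMono_nat_of_lt_succ fun n => by
    rw [blockStart_succ]
    exact Nat.lt_add_of_pos_right (List.length_pos_of_ne_nil (hu n))

theorem length_flatten_map_range (u : ℕ → List A) (n : ℕ) :
    ((List.range n).map u).flatten.length = blockStart u n := by
  induction n with
  | zero => rfl
  | succ n ih => simp [List.range_succ, blockStart_succ, ih]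

theorem getD_flatten_map_range (u : ℕ → List A) {m n i : ℕ} (hmn : m ≤ n) (hi : i < blockStart u m)
    (a : A) :
    ((List.range n).map u).flatten.getD i a = ((List.range m).map u).flatten.getD i a := by
  obtain ⟨k, rfl⟩ := Nat.exists_eq_add_of_le hmn
  rw [List.range_add, List.map_append, List.flatten_append,
    List.getD_append _ _ _ _ (by rwa [length_flatten_map_range])]

theorem flatWord_eq_getD [Inhabited A] {u : ℕ → List A} (hu : ∀ n, u n ≠ []) {n i : ℕ}
    (hi : i < blockStart u n) :
    flatWord u i = ((List.range n).map u).flatten.getD i default := by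
  have hi' : i < blockStart u (i + 1) := (blockStart_strictMono hu).le_apply
  rcases le_total n (i + 1) with h | h
  · exact getD_flatten_map_range u h hi default
  · exact (getD_flatten_map_range u h hi' default).symm

theorem flatWord_eqOn [Inhabited A] {u u' : ℕ → List A} (hu : ∀ n, u n ≠ [])
    (hu' : ∀ n, u' n ≠ []) {n : ℕ} (h : ∀ i < n, u i = u' i) :
    Set.EqOn (flatWord u) (flatWord u') (Set.Iio (blockStart u n)) := by
  intro m hm
  have hmap : (List.range n).map u = (List.range n).map u' :=
    List.map_congr_left fun i hi => h i (List.mem_range.1 hi)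
  have hstart : blockStart u n = blockStart u' n := by
    rw [← length_flatten_map_range, ← length_flatten_map_range, hmap]
  rw [flatWord_eq_getD hu hm, flatWord_eq_getD hu' (hstart ▸ hm), hmap]

theorem seg_zero_flatWord [Inhabited A] {u : ℕ → List A} (hu : ∀ n, u n ≠ []) (n : ℕ) :
    seg (flatWord u) 0 (blockStart u n) = ((List.range n).map u).flatten := by
  apply List.ext_getElem
  · rw [length_seg, length_flatten_map_range, Nat.sub_zero]
  · intro i hi hi'
    rw [← List.getD_eq_getElem _ default hi, ← List.getD_eq_getElem _ default hi']
    rw [length_flatten_map_range] at hi'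
    rw [getD_seg_zero _ hi', flatWord_eq_getD hu hi']

theorem seg_flatWord [Inhabited A] {u : ℕ → List A} (hu : ∀ n, u n ≠ []) (n : ℕ) :
    seg (flatWord u) (blockStart u n) (blockStart u (n + 1)) = u n := by
  have h := seg_append_seg (flatWord u) (Nat.zero_le _)
    ((blockStart_strictMono hu).monotone n.le_succ)
  rw [seg_zero_flatWord hu, seg_zero_flatWord hu, List.range_succ, List.map_append,
    List.flatten_append] at h
  simpa using h

theorem flatten_map_seg (w : ℕ → A) {N : ℕ → ℕ} (h0 : N 0 = 0) (hN : Monotone N) (n : ℕ) :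
    ((List.range n).map fun i => seg w (N i) (N (i + 1))).flatten = seg w 0 (N n) := by
  induction n with
  | zero => simp [h0, seg]
  | succ n ih => simp [List.range_succ, ih, seg_append_seg w (Nat.zero_le _) (hN n.le_succ)]

theorem flatWord_seg [Inhabited A] (w : ℕ → A) {N : ℕ → ℕ} (h0 : N 0 = 0) (hN : StrictMono N) :
    flatWord (fun i => seg w (N i) (N (i + 1))) = w := by
  funext i
  rw [flatWord, flatten_map_seg w h0 hN.monotone, getD_seg_zero w hN.le_apply]

end Words

section Strategies

variable {I O : Type}

/-- The number of letters Player I has picked when Player O picks her `i`-th letter in a delay game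
with delay function `f`. -/
def lookahead (f : ℕ → ℕ) (i : ℕ) : ℕ := ∑ j ∈ Finset.range (i + 1), f j

theorem lookahead_monotone (f : ℕ → ℕ) : Monotone (lookahead f) := fun _ _ h =>
  Finset.sum_le_sum_of_subset (Finset.range_mono (Nat.succ_le_succ h))

theorem add_le_lookahead {f : ℕ → ℕ} (hf : DelayFn f) (i : ℕ) : f 0 + i ≤ lookahead f i := by
  induction i with
  | zero => simp [lookahead]
  | succ i ih =>
    rw [lookahead, Finset.sum_range_succ, ← add_assoc]
    exact Nat.add_le_add ih (hf (i + 1))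

/-- A map `G` from the letters of Player O to those of Player I in which the first `h i` letters of
the image only depend on the first `i` letters of the argument. For `h = lookahead f`, such maps are
the strategies of Player I in a delay game with delay function `f`. -/
def Causal (h : ℕ → ℕ) (G : (ℕ → O) → ℕ → I) : Prop :=
  ∀ ⦃β β' : ℕ → O⦄ ⦃i : ℕ⦄, Set.EqOn β β' (Set.Iio i) → Set.EqOn (G β) (G β') (Set.Iio (h i))

theorem Causal.mono {h h' : ℕ → ℕ} {G : (ℕ → O) → ℕ → I} (hG : Causal h G) (hh : h' ≤ h) :
    Causal h' G := fun _ _ i hβ =>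
  (hG hβ).mono (Set.Iio_subset_Iio (hh i))

theorem IWins.exists_causal [Inhabited I] {f : ℕ → ℕ} {L : Set (ℕ → I × O)} (h : IWins f L)
    (hf : DelayFn f) :
    ∃ G : (ℕ → O) → ℕ → I, Causal (lookahead f) G ∧ ∀ β, (fun n => (G β n, β n)) ∉ L := by
  obtain ⟨τ, hlength, hτ⟩ := h
  let moves (β : ℕ → O) (i : ℕ) : List I := τ ((List.range i).map β)
  have length_moves (β i) : (moves β i).length = f i := by simp [moves, hlength]
  have moves_ne_nil (β i) : moves β i ≠ [] :=
    List.ne_nil_of_length_pos (by rw [length_moves]; exact hf i)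
  refine ⟨fun β => flatWord (moves β), fun β β' i hβ => ?_, fun β => hτ _ β fun _ => rfl⟩
  have hstart : blockStart (moves β) (i + 1) = lookahead f i := by
    simp only [blockStart, length_moves, lookahead]
  rw [← hstart]
  refine flatWord_eqOn (moves_ne_nil β) (moves_ne_nil β') fun j hj => ?_
  refine congrArg τ (List.map_congr_left fun m hm => hβ ?_)
  exact (List.mem_range.1 hm).trans_le (Nat.lt_succ_iff.1 hj)

theorem Causal.iWins [Inhabited I] [Inhabited O] {f : ℕ → ℕ} {L : Set (ℕ → I × O)}
    {G : (ℕ → O) → ℕ → I} (hG : Causal (lookahead f) G) (hf : DelayFn f)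
    (hL : ∀ β, (fun n => (G β n, β n)) ∉ L) : IWins f L := by
  let N (i : ℕ) : ℕ := ∑ j ∈ Finset.range i, f j
  have N_succ (i) : N (i + 1) = N i + f i := Finset.sum_range_succ ..
  have N_strictMono : StrictMono N := strictMono_nat_of_lt_succ fun i => by
    rw [N_succ]
    exact Nat.lt_add_of_pos_right (hf i)
  refine ⟨fun v => seg (G (padWord v)) (N v.length) (N (v.length + 1)), fun v => ?_,
    fun u v hu => ?_⟩
  · rw [length_seg, N_succ, Nat.add_sub_cancel_left]
  · have hu' : u = fun i => seg (G v) (N i) (N (i + 1)) := by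
      funext i
      have hv : (List.range i).map v = seg v 0 i := by simp [seg]
      rw [hu i, hv]
      simp only [length_seg, Nat.sub_zero]
      exact seg_congr ((hG (padWord_seg_eqOn v i)).mono Set.Ico_subset_Iio_self)
    rw [hu', flatWord_seg (G v) rfl N_strictMono]
    exact hL v

theorem iWins_of_isEmpty [Inhabited I] [IsEmpty O] (f : ℕ → ℕ) (L : Set (ℕ → I × O)) :
    IWins f L :=
  ⟨fun v => List.replicate (f v.length) default, fun _ => List.length_replicate,
    fun _ v => isEmptyElim (v 0)⟩

end Strategies

section Pumping

variable {A B : Type}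

theorem exists_length_lt_of_append_congr {Φ : List A → B}
    (hΦ : ∀ x x' z, Φ x = Φ x' → Φ (x ++ z) = Φ (x' ++ z)) {s : Set B} (hs : s.Finite)
    (hmem : ∀ x, Φ x ∈ s) {x : List A} (hx : s.ncard ≤ x.length) :
    ∃ x', x.length < x'.length ∧ Φ x' = Φ x := by
  have hcard : s.ncard < (Set.Iic x.length).ncard := by
    simpa [Set.ncard_eq_toFinset_card'] using Nat.lt_succ_of_le hx
  obtain ⟨i, hi, j, hj, hij, hΦij⟩ := Set.exists_ne_map_eq_of_ncard_lt_of_maps_to hcard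
    (f := fun i => Φ (x.take i)) (fun _ _ => hmem _) hs
  wlog hlt : i < j generalizing i j
  · exact this j hj i hi hij.symm hΦij.symm (hij.lt_or_gt.resolve_left hlt)
  refine ⟨x.take j ++ x.drop i, ?_, ?_⟩
  · rw [Set.mem_Iic] at hj
    simp only [List.length_append, List.length_take, List.length_drop]
    omega
  · rw [← hΦ _ _ _ hΦij, List.take_append_drop]

theorem exists_le_length_of_append_congr {Φ : List A → B}
    (hΦ : ∀ x x' z, Φ x = Φ x' → Φ (x ++ z) = Φ (x' ++ z)) {s : Set B} (hs : s.Finite)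
    (hmem : ∀ x, Φ x ∈ s) {x : List A} (hx : s.ncard ≤ x.length) (l : ℕ) :
    ∃ x', l ≤ x'.length ∧ Φ x' = Φ x := by
  suffices ∃ x', l ≤ x'.length ∧ x.length ≤ x'.length ∧ Φ x' = Φ x from
    let ⟨x', hl, _, hx'⟩ := this
    ⟨x', hl, hx'⟩
  induction l with
  | zero => exact ⟨x, Nat.zero_le _, le_rfl, rfl⟩
  | succ l ih =>
    obtain ⟨x', hl, hxx', hΦ'⟩ := ih
    obtain ⟨x'', hlt, hΦ''⟩ := exists_length_lt_of_append_congr hΦ hs hmem (hx.trans hxx')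
    exact ⟨x'', hl.trans_lt hlt, hxx'.trans hlt.le, hΦ''.trans hΦ'⟩

end Pumping

namespace PACost

section Acceptance

variable {Q A : Type} (M : PACost Q A) (q : Q) (w : ℕ → A)

/-- The color of the state reached after the first `n` letters of `w`. -/
def colorAt (n : ℕ) : ℕ := M.Ω (M.stateAt q w n)

theorem segCost_add_segCost {m n p : ℕ} (hmn : m ≤ n) (hnp : n ≤ p) :
    M.segCost q w m n + M.segCost q w n p = M.segCost q w m p := by
  rw [segCost, segCost, segCost, ← Finset.Ico_union_Ico_eq_Ico hmn hnp, Finset.filter_union]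
  exact (Finset.card_union_of_disjoint
    (Finset.disjoint_filter_filter (Finset.Ico_disjoint_Ico_consecutive m n p))).symm

theorem segCost_le_sub (m n : ℕ) : M.segCost q w m n ≤ n - m :=
  (Finset.card_filter_le _ _).trans_eq (Nat.card_Ico m n)

theorem segCost_mono {m m' n n' : ℕ} (hm : m' ≤ m) (hn : n ≤ n') :
    M.segCost q w m n ≤ M.segCost q w m' n' :=
  Finset.card_le_card (Finset.filter_subset_filter _ (Finset.Ico_subset_Ico hm hn))

variable {M q w}

theorem cor_le_iff {n b : ℕ} :
    M.Cor q w n ≤ b ↔ (¬ Even (M.colorAt q w n) → ∃ n', n < n' ∧ Even (M.colorAt q w n') ∧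
      M.colorAt q w n < M.colorAt q w n' ∧ M.segCost q w n n' ≤ b) := by
  unfold Cor colorAt
  split_ifs with heven
  · simp [heven]
  · simp only [heven, not_false_eq_true, true_imp_iff]
    constructor
    · intro h
      obtain ⟨_, ⟨n', hn', ⟨-, hlt, heven'⟩, rfl⟩, hcost⟩ :=
        sInf_lt_iff.1 (h.trans_lt (ENat.natCast_lt_natCast.2 b.lt_succ_self))
      exact ⟨n', hn', heven', hlt, Nat.lt_succ_iff.1 (ENat.natCast_lt_natCast.1 hcost)⟩
    · rintro ⟨n', hn', heven', hlt, hcost⟩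
      exact sInf_le_of_le ⟨n', hn', ⟨⟨_, rfl⟩, hlt, heven'⟩, rfl⟩ (by exact_mod_cast hcost)

theorem accepting_iff : M.Accepting q w ↔ ∃ b K : ℕ, ∀ n, K ≤ n → M.Cor q w n ≤ b := by
  constructor
  · intro h
    obtain ⟨b, hb⟩ := ENat.ne_top_iff_exists.1 h.ne
    have hlt : Filter.limsup (fun n => M.Cor q w n) Filter.atTop < ((b + 1 : ℕ) : ℕ∞) :=
      hb ▸ ENat.natCast_lt_natCast.2 b.lt_succ_self
    obtain ⟨K, hK⟩ := Filter.eventually_atTop.1 (Filter.eventually_lt_of_limsup_lt hlt)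
    exact ⟨b + 1, K, fun n hn => (hK n hn).le⟩
  · rintro ⟨b, K, h⟩
    exact (Filter.limsup_le_of_le (h := Filter.eventually_atTop.2 ⟨K, h⟩)).trans_lt
      (ENat.natCast_lt_top b)

end Acceptance

section Summary

variable {Q A : Type}

/-- What is remembered about a block of a run: the state at its end, its largest even color, its
largest odd color that is not answered within the block, and whether it contains an
increment-transition. The color of the state at the end belongs to the next block, and a missing
color is encoded as `0`, which neither answers nor makes a request. -/
structure Summary (Q : Type) where
  state : Q
  maxEven : ℕ
  pending : ℕ
  incr : Bool

/-- The summary of a block after one more transition. -/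
def Summary.step (M : PACost Q A) (t : Summary Q) (a : A) : Summary Q where
  state := M.δ t.state a
  maxEven := if Even (M.Ω t.state) then max t.maxEven (M.Ω t.state) else t.maxEven
  pending :=
    if Even (M.Ω t.state) then (if t.pending < M.Ω t.state then 0 else t.pending)
    else max t.pending (M.Ω t.state)
  incr := t.incr || M.Cst t.state a

/-- The summary of the run on the finite word `x` starting in `q`. -/
def summary (M : PACost Q A) (q : Q) (x : List A) : Summary Q :=
  x.foldl (Summary.step M) ⟨q, 0, 0, false⟩

/-- The summary of the run infix between positions `m` and `n`. -/
def segSummary (M : PACost Q A) (q : Q) (w : ℕ → A) (m n : ℕ) : Summary Q :=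
  M.summary (M.stateAt q w m) (seg w m n)

variable {M : PACost Q A} {q : Q} {w : ℕ → A} {m n : ℕ}

theorem segSummary_self : M.segSummary q w m m = ⟨M.stateAt q w m, 0, 0, false⟩ := by
  simp [segSummary, seg, summary]

theorem segSummary_succ (h : m ≤ n) :
    M.segSummary q w m (n + 1) = (M.segSummary q w m n).step M (w n) := by
  simp [segSummary, seg_succ w h, summary]

theorem state_segSummary (h : m ≤ n) : (M.segSummary q w m n).state = M.stateAt q w n := by
  induction n, h using Nat.le_induction with
  | base => rw [segSummary_self]
  | succ n h ih => rw [segSummary_succ h, Summary.step, ih, stateAt]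

theorem lt_maxEven_segSummary_iff (h : m ≤ n) (c : ℕ) :
    c < (M.segSummary q w m n).maxEven ↔
      ∃ i ∈ Set.Ico m n, Even (M.colorAt q w i) ∧ c < M.colorAt q w i := by
  induction n, h using Nat.le_induction with
  | base => simp [segSummary_self]
  | succ n h ih =>
    have hcolor : M.Ω (M.segSummary q w m n).state = M.colorAt q w n := by
      rw [state_segSummary h, colorAt]
    have hIco : Set.Ico m (n + 1) = insert n (Set.Ico m n) := Order.Ico_succ_right_eq_insert h
    rw [segSummary_succ h, hIco, Set.exists_mem_insert, ← ih, Summary.step, hcolor]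
    split_ifs with heven <;> simp [heven, or_comm]

theorem le_pending_segSummary_iff (h : m ≤ n) {c : ℕ} (hc : 0 < c) :
    c ≤ (M.segSummary q w m n).pending ↔
      ∃ i ∈ Set.Ico m n, ¬ Even (M.colorAt q w i) ∧ c ≤ M.colorAt q w i ∧
        ∀ j ∈ Set.Ioo i n, Even (M.colorAt q w j) → M.colorAt q w j ≤ M.colorAt q w i := by
  induction n, h using Nat.le_induction generalizing c with
  | base => simpa [segSummary_self] using hc.ne'
  | succ n h ih =>
    have hcolor : M.Ω (M.segSummary q w m n).state = M.colorAt q w n := by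
      rw [state_segSummary h, colorAt]
    have hIco : Set.Ico m (n + 1) = insert n (Set.Ico m n) := Order.Ico_succ_right_eq_insert h
    have hIoo {i : ℕ} (hi : i ∈ Set.Ico m n) : Set.Ioo i (n + 1) = insert n (Set.Ioo i n) :=
      Order.Ioo_succ_right_eq_insert hi.2
    have hself : Set.Ioo n (n + 1) = ∅ := Set.Ioo_add_one_right_eq_Ioc n n ▸ Set.Ioc_self n
    rw [segSummary_succ h, Summary.step, hcolor, hIco, Set.exists_mem_insert, hself]
    by_cases heven : Even (M.colorAt q w n)
    · have hmax : c ≤ (if (M.segSummary q w m n).pending < M.colorAt q w n then 0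
          else (M.segSummary q w m n).pending) ↔
          max c (M.colorAt q w n) ≤ (M.segSummary q w m n).pending := by
        split_ifs <;> omega
      simp only [heven, if_true, not_true_eq_false, false_and, false_or]
      rw [hmax, ih (lt_max_of_lt_left hc)]
      refine exists_congr fun i => and_congr_right fun hi => ?_
      rw [hIoo hi, Set.forall_mem_insert, max_le_iff]
      tauto
    · simp only [heven, if_false, not_false_eq_true, true_and, le_max_iff]
      rw [ih hc, or_comm]
      refine or_congr (by simp) (exists_congr fun i => and_congr_right fun hi => ?_)
      rw [hIoo hi, Set.forall_mem_insert]
      tauto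

theorem incr_segSummary_iff (h : m ≤ n) :
    (M.segSummary q w m n).incr = true ↔ 0 < M.segCost q w m n := by
  simp only [segCost, Finset.card_pos, Finset.filter_nonempty_iff, Finset.mem_Ico,
    ← Set.mem_Ico]
  induction n, h using Nat.le_induction with
  | base => simp [segSummary_self]
  | succ n h ih =>
    have hIco : Set.Ico m (n + 1) = insert n (Set.Ico m n) := Order.Ico_succ_right_eq_insert h
    rw [segSummary_succ h, hIco, Set.exists_mem_insert, ← ih, Summary.step, Bool.or_eq_true,
      state_segSummary h, or_comm]

end Summary

section BlockComparison

variable {Q A : Type} {M : PACost Q A} {q : Q} {w w' : ℕ → A} {N N' : ℕ → ℕ} {d : ℕ}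

theorem segCost_le_mul_of_segSummary_eq (hN : Monotone N) (hN' : Monotone N')
    (hd : ∀ j, N (j + 1) - N j ≤ d)
    (h : ∀ j, M.segSummary q w (N j) (N (j + 1)) = M.segSummary q w' (N' j) (N' (j + 1)))
    {a b : ℕ} (hab : a ≤ b) :
    M.segCost q w (N a) (N b) ≤ d * M.segCost q w' (N' a) (N' b) := by
  induction b, hab using Nat.le_induction with
  | base => simp [segCost]
  | succ b hab ih =>
    rw [← segCost_add_segCost M q w (hN hab) (hN b.le_succ),
      ← segCost_add_segCost M q w' (hN' hab) (hN' b.le_succ), mul_add]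
    refine Nat.add_le_add ih ?_
    rcases Nat.eq_zero_or_pos (M.segCost q w (N b) (N (b + 1))) with hzero | hpos
    · exact hzero ▸ Nat.zero_le _
    · have hpos' : 0 < M.segCost q w' (N' b) (N' (b + 1)) := by
        rwa [← incr_segSummary_iff (hN' b.le_succ), ← h, incr_segSummary_iff (hN b.le_succ)]
      calc M.segCost q w (N b) (N (b + 1)) ≤ N (b + 1) - N b := segCost_le_sub ..
        _ ≤ d := hd b
        _ ≤ d * M.segCost q w' (N' b) (N' (b + 1)) := Nat.le_mul_of_pos_right d hpos'

theorem segCost_le_mul_add_two_of_segSummary_eq (hN : Monotone N) (hN' : Monotone N')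
    (hd : ∀ j, N (j + 1) - N j ≤ d)
    (h : ∀ j, M.segSummary q w (N j) (N (j + 1)) = M.segSummary q w' (N' j) (N' (j + 1)))
    {a b m m' n n' : ℕ} (hab : a < b) (hm : N a ≤ m) (hm' : m' ≤ N' (a + 1)) (hn : n ≤ N (b + 1))
    (hn' : N' b ≤ n') :
    M.segCost q w m n ≤ d * (M.segCost q w' m' n' + 2) := by
  have block_le (j) : M.segCost q w (N j) (N (j + 1)) ≤ d :=
    (segCost_le_sub ..).trans (hd j)
  calc M.segCost q w m n ≤ M.segCost q w (N a) (N (b + 1)) := segCost_mono M q w hm hn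
    _ = M.segCost q w (N a) (N (a + 1)) + M.segCost q w (N (a + 1)) (N b) +
        M.segCost q w (N b) (N (b + 1)) := by
      rw [segCost_add_segCost M q w (hN a.le_succ) (hN hab),
        segCost_add_segCost M q w (hN hab.le) (hN b.le_succ)]
    _ ≤ d + d * M.segCost q w' (N' (a + 1)) (N' b) + d :=
      Nat.add_le_add (Nat.add_le_add (block_le a)
        (segCost_le_mul_of_segSummary_eq hN hN' hd h hab)) (block_le b)
    _ = d * (M.segCost q w' (N' (a + 1)) (N' b) + 2) := by ring
    _ ≤ d * (M.segCost q w' m' n' + 2) :=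
      Nat.mul_le_mul_left d (Nat.add_le_add_right (segCost_mono M q w' hm' hn') 2)

theorem cor_le_of_segSummary_eq_of_unanswered (hN : StrictMono N) (hN'0 : N' 0 = 0)
    (hN' : StrictMono N') (hd : ∀ j, N (j + 1) - N j ≤ d)
    (h : ∀ j, M.segSummary q w (N j) (N (j + 1)) = M.segSummary q w' (N' j) (N' (j + 1)))
    {j n b : ℕ} (hn : n ∈ Set.Ico (N j) (N (j + 1)))
    (hunanswered : ∀ m ∈ Set.Ioo n (N (j + 1)),
      Even (M.colorAt q w m) → M.colorAt q w m ≤ M.colorAt q w n)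
    (hb : ∀ n' ≥ N' j, M.Cor q w' n' ≤ b) : M.Cor q w n ≤ ↑(d * (b + 2)) := by
  refine cor_le_iff.2 fun hodd => ?_
  have hpos : 0 < M.colorAt q w n := (Nat.not_even_iff_odd.1 hodd).pos
  have hpending := (le_pending_segSummary_iff (hN j.lt_succ_self).le hpos).2
    ⟨n, hn, hodd, le_rfl, hunanswered⟩
  rw [h, le_pending_segSummary_iff (hN' j.lt_succ_self).le hpos] at hpending
  obtain ⟨n', hn', hodd', hle, hunanswered'⟩ := hpending
  obtain ⟨m', hnm', heven', hlt', hcost'⟩ := cor_le_iff.1 (hb n' hn'.1) hodd'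
  have hjm' : N' (j + 1) ≤ m' := by
    by_contra! hm'
    exact (hunanswered' m' ⟨hnm', hm'⟩ heven').not_gt hlt'
  obtain ⟨i, him', hmi'⟩ := exists_mem_Ico_succ hN'0 hN' m'
  have hji : j < i := Nat.lt_succ_iff.1 (hN'.lt_iff_lt.1 (hjm'.trans_lt hmi'))
  have hmaxEven := (lt_maxEven_segSummary_iff (hN' i.lt_succ_self).le _).2
    ⟨m', ⟨him', hmi'⟩, heven', hle.trans_lt hlt'⟩
  rw [← h, lt_maxEven_segSummary_iff (hN i.lt_succ_self).le] at hmaxEven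
  obtain ⟨m, ⟨him, hmi⟩, heven, hlt⟩ := hmaxEven
  refine ⟨m, hn.2.trans_le ((hN.monotone hji).trans him), heven, hlt, ?_⟩
  calc M.segCost q w n m ≤ d * (M.segCost q w' n' m' + 2) :=
        segCost_le_mul_add_two_of_segSummary_eq hN.monotone hN'.monotone hd h hji hn.1 hn'.2.le
          hmi.le him'
    _ ≤ d * (b + 2) := Nat.mul_le_mul_left d (Nat.add_le_add_right hcost' 2)

theorem accepting_of_segSummary_eq (hN0 : N 0 = 0) (hN'0 : N' 0 = 0) (hN : StrictMono N)
    (hN' : StrictMono N') (hd : ∀ j, N (j + 1) - N j ≤ d)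
    (h : ∀ j, M.segSummary q w (N j) (N (j + 1)) = M.segSummary q w' (N' j) (N' (j + 1)))
    (hw' : M.Accepting q w') : M.Accepting q w := by
  obtain ⟨b, K, hb⟩ := accepting_iff.1 hw'
  refine accepting_iff.2 ⟨d * (b + 2), N K, fun n hn => ?_⟩
  obtain ⟨j, hjn, hnj⟩ := exists_mem_Ico_succ hN0 hN n
  by_cases hanswered : ∃ m ∈ Set.Ioo n (N (j + 1)),
      Even (M.colorAt q w m) ∧ M.colorAt q w n < M.colorAt q w m
  · obtain ⟨m, hm, heven, hlt⟩ := hanswered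
    refine cor_le_iff.2 fun _ => ⟨m, hm.1, heven, hlt, ?_⟩
    calc M.segCost q w n m ≤ M.segCost q w (N j) (N (j + 1)) := segCost_mono M q w hjn hm.2.le
      _ ≤ N (j + 1) - N j := segCost_le_sub ..
      _ ≤ d := hd j
      _ ≤ d * (b + 2) := Nat.le_mul_of_pos_right d (Nat.succ_pos _)
  · push Not at hanswered
    have hKj : K ≤ j := Nat.lt_succ_iff.1 (hN.lt_iff_lt.1 (hn.trans_lt hnj))
    exact cor_le_of_segSummary_eq_of_unanswered hN hN'0 hN' hd h ⟨hjn, hnj⟩ hanswered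
      fun n' hn' => hb n' (hKj.trans (hN'.le_apply.trans hn'))

end BlockComparison

section Profile

variable {Q I O : Type}

/-- All values that summaries of runs of `M` can take. -/
def summaries {A : Type} [Fintype Q] (M : PACost Q A) : Finset (Summary Q) :=
  let colors := insert 0 (Finset.univ.image M.Ω)
  (Finset.univ ×ˢ colors ×ˢ colors ×ˢ Finset.univ).image fun t => ⟨t.1, t.2.1, t.2.2.1, t.2.2.2⟩

theorem summary_mem_summaries {A : Type} [Fintype Q] (M : PACost Q A) (q : Q) (x : List A) :
    M.summary q x ∈ M.summaries := by
  suffices (M.summary q x).maxEven ∈ insert 0 (Finset.univ.image M.Ω) ∧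
      (M.summary q x).pending ∈ insert 0 (Finset.univ.image M.Ω) from
    Finset.mem_image.2 ⟨((M.summary q x).state, (M.summary q x).maxEven, (M.summary q x).pending,
      (M.summary q x).incr), by simpa using this, rfl⟩
  induction x using List.reverseRecOn with
  | nil => simp [summary]
  | append_singleton x a ih =>
    have hcolor : M.Ω (M.summary q x).state ∈ insert 0 (Finset.univ.image M.Ω) :=
      Finset.mem_insert_of_mem (Finset.mem_image_of_mem M.Ω (Finset.mem_univ _))
    have hsummary : M.summary q (x ++ [a]) = (M.summary q x).step M a := by simp [summary]
    rw [hsummary, Summary.step]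
    dsimp only
    constructor
    · split_ifs
      · exact max_rec' (· ∈ _) ih.1 hcolor
      · exact ih.1
    · split_ifs
      · exact Finset.mem_insert_self ..
      · exact ih.2
      · exact max_rec' (· ∈ _) ih.2 hcolor

theorem card_summaries_le {A : Type} [Fintype Q] (M : PACost Q A) :
    M.summaries.card ≤ 2 * Fintype.card Q * ((Finset.univ.image M.Ω).card + 1) ^ 2 := by
  refine Finset.card_image_le.trans ?_
  simp only [Finset.card_product, Finset.card_univ, Fintype.card_bool]
  calc Fintype.card Q * ((insert 0 (Finset.univ.image M.Ω)).card *
        ((insert 0 (Finset.univ.image M.Ω)).card * 2))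
      = 2 * Fintype.card Q * (insert 0 (Finset.univ.image M.Ω)).card ^ 2 := by ring
    _ ≤ 2 * Fintype.card Q * ((Finset.univ.image M.Ω).card + 1) ^ 2 := by
      gcongr
      exact Finset.card_insert_le ..

/-- The pairs of a state and the summary of a run that starts in this state and in which Player I
has picked the letters in `x`. -/
def profile (M : PACost Q (I × O)) (x : List I) : Set (Q × Summary Q) :=
  {p | ∃ y : List O, y.length = x.length ∧ M.summary p.1 (x.zip y) = p.2}

theorem mem_profile_iff {M : PACost Q (I × O)} {x : List I} {q : Q} {t : Summary Q} :
    (q, t) ∈ M.profile x ↔ ∃ y : List O, y.length = x.length ∧ M.summary q (x.zip y) = t :=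
  Iff.rfl

theorem mem_profile_append_iff (M : PACost Q (I × O)) (x z : List I) (q : Q) (t : Summary Q) :
    (q, t) ∈ M.profile (x ++ z) ↔ ∃ s, (q, s) ∈ M.profile x ∧
      ∃ y : List O, y.length = z.length ∧ (z.zip y).foldl (Summary.step M) s = t := by
  simp only [mem_profile_iff]
  constructor
  · rintro ⟨y, hy, rfl⟩
    rw [List.length_append] at hy
    have htake : (y.take x.length).length = x.length := by
      rw [List.length_take]
      omega
    refine ⟨_, ⟨y.take x.length, htake, rfl⟩, y.drop x.length, ?_, ?_⟩
    · rw [List.length_drop]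
      omega
    · rw [summary, ← List.foldl_append, ← List.zip_append htake.symm, List.take_append_drop]
      rfl
  · rintro ⟨_, ⟨y, hy, rfl⟩, y', hy', rfl⟩
    refine ⟨y ++ y', by simp [hy, hy'], ?_⟩
    rw [List.zip_append hy.symm, summary, List.foldl_append]
    rfl

theorem profile_append_congr (M : PACost Q (I × O)) (x x' z : List I)
    (h : M.profile x = M.profile x') : M.profile (x ++ z) = M.profile (x' ++ z) := by
  ext ⟨q, t⟩
  rw [mem_profile_append_iff, mem_profile_append_iff, h]

/-- Every word of length at least `d` has the profile of arbitrarily long words. -/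
def PumpLength (M : PACost Q (I × O)) (d : ℕ) : Prop :=
  ∀ x, d ≤ x.length → ∀ l, ∃ x', l ≤ x'.length ∧ M.profile x' = M.profile x

theorem pumpLength_of_le [Fintype Q] (M : PACost Q (I × O)) {d : ℕ}
    (hd : 2 ^ (2 * Fintype.card Q ^ 2 * ((Finset.univ.image M.Ω).card + 1) ^ 2) ≤ d) :
    M.PumpLength d := by
  let s : Finset (Q × Summary Q) := Finset.univ ×ˢ M.summaries
  have hs : (s : Set (Q × Summary Q)).Finite := s.finite_toSet
  have hcard : s.card ≤ 2 * Fintype.card Q ^ 2 * ((Finset.univ.image M.Ω).card + 1) ^ 2 := by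
    rw [Finset.card_product, Finset.card_univ]
    exact (Nat.mul_le_mul_left _ M.card_summaries_le).trans_eq (by ring)
  intro x hx l
  refine exists_le_length_of_append_congr M.profile_append_congr hs.powerset (fun x => ?_) ?_ l
  · rintro ⟨q, t⟩ hmem
    obtain ⟨y, -, rfl⟩ := mem_profile_iff.1 hmem
    exact Finset.mem_coe.2
      (Finset.mem_product.2 ⟨Finset.mem_univ q, M.summary_mem_summaries q (x.zip y)⟩)
  · rw [Set.ncard_powerset _ hs, Set.ncard_coe_finset]
    exact (Nat.pow_le_pow_right two_pos hcard).trans (hd.trans hx)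

/-- A word with the profile of `x` and length at least `l`. -/
def pump (M : PACost Q (I × O)) (x : List I) (l : ℕ) : List I :=
  Classical.epsilon fun x' => l ≤ x'.length ∧ M.profile x' = M.profile x

theorem PumpLength.pump_spec {M : PACost Q (I × O)} {d : ℕ} (hM : M.PumpLength d) {x : List I}
    (hx : d ≤ x.length) (l : ℕ) :
    l ≤ (M.pump x l).length ∧ M.profile (M.pump x l) = M.profile x :=
  Classical.epsilon_spec (hM x hx l)

/-- Letters of Player O that, played against `x` from `q`, yield the summary of `z`. -/
def pull (M : PACost Q (I × O)) (q : Q) (x : List I) (z : List (I × O)) : List O :=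
  Classical.epsilon fun y => y.length = x.length ∧ M.summary q (x.zip y) = M.summary q z

theorem pull_spec (M : PACost Q (I × O)) (q : Q) {x x' : List I} {y' : List O}
    (hx : M.profile x' = M.profile x) (hy' : y'.length = x'.length) :
    (M.pull q x (x'.zip y')).length = x.length ∧
      M.summary q (x.zip (M.pull q x (x'.zip y'))) = M.summary q (x'.zip y') := by
  have hmem : (q, M.summary q (x'.zip y')) ∈ M.profile x :=
    hx ▸ mem_profile_iff.2 ⟨y', hy', rfl⟩
  exact Classical.epsilon_spec hmem

end Profile

section Simulation

variable {Q I O : Type} [Inhabited O]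

/-- A stage of the simulation, within a real play with an arbitrary delay function, of a play with a
lookahead of two blocks. In the simulated play, the automaton is in state `state`, Player O has
picked `answers`, and `short` is the next block of Player I. In the real play, the automaton is in
the same state after `start` letters, and `long` is the next block of Player I. -/
structure Stage (Q I O : Type) where
  state : Q
  answers : List O
  short : List I
  start : ℕ
  long : List I

/-- The block of the real play in which Player O answers `s.long` with the letters of `β`. -/
def Stage.realBlock (s : Stage Q I O) (β : ℕ → O) : List (I × O) :=
  s.long.zip (seg β s.start (s.start + s.long.length))

/-- The answer of Player O to `s.short` in the simulated play. -/
def Stage.answer (M : PACost Q (I × O)) (s : Stage Q I O) (β : ℕ → O) : List O :=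
  M.pull s.state s.short (s.realBlock β)

/-- The stage after `s`. Player I follows `G` in the simulated play, where he is one block ahead, so
that his next block does not depend on the answer to `s.short`. -/
def Stage.next (M : PACost Q (I × O)) (G : (ℕ → O) → ℕ → I) (F : ℕ → ℕ) (d : ℕ) (β : ℕ → O)
    (s : Stage Q I O) : Stage Q I O :=
  let short := seg (G (padWord s.answers)) (s.answers.length + d) (s.answers.length + 2 * d)
  let start := s.start + s.long.length
  { state := (M.summary s.state (s.realBlock β)).state
    answers := s.answers ++ s.answer M β
    short := short
    start := start
    long := M.pump short (F start) }

/-- The stages of the simulation when Player O picks `β` in the real play. Player I follows the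
causal map `G` in the simulated play, whose blocks have length `d`, and his block starting at
position `i` of the real play has length at least `F i`. -/
def simulation (M : PACost Q (I × O)) (G : (ℕ → O) → ℕ → I) (F : ℕ → ℕ) (d : ℕ) (β : ℕ → O) :
    ℕ → Stage Q I O
  | 0 =>
    let short := seg (G (padWord [])) 0 d
    ⟨M.qI, [], short, 0, M.pump short (F 0)⟩
  | j + 1 => (simulation M G F d β j).next M G F d β

/-- The letters Player I picks in the real play. -/
def realWord [Inhabited I] (M : PACost Q (I × O)) (G : (ℕ → O) → ℕ → I) (F : ℕ → ℕ) (d : ℕ)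
    (β : ℕ → O) : ℕ → I :=
  flatWord fun j => (simulation M G F d β j).long

/-- The letters Player O picks in the simulated play. -/
def simulatedWord (M : PACost Q (I × O)) (G : (ℕ → O) → ℕ → I) (F : ℕ → ℕ) (d : ℕ) (β : ℕ → O) :
    ℕ → O :=
  flatWord fun j => (simulation M G F d β j).answer M β

variable {M : PACost Q (I × O)} {G : (ℕ → O) → ℕ → I} {F : ℕ → ℕ} {d : ℕ} (β : ℕ → O) (j : ℕ)

theorem length_short_simulation : (simulation M G F d β j).short.length = d := by
  cases j with
  | zero => exact length_seg ..
  | succ j => exact (length_seg ..).trans (by omega)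

theorem long_simulation : (simulation M G F d β j).long =
    M.pump (simulation M G F d β j).short (F (simulation M G F d β j).start) := by
  cases j <;> rfl

theorem le_length_long_simulation (hM : M.PumpLength d) :
    F (simulation M G F d β j).start ≤ (simulation M G F d β j).long.length :=
  long_simulation (M := M) β j ▸ (hM.pump_spec (length_short_simulation β j).ge _).1

theorem profile_long_simulation (hM : M.PumpLength d) :
    M.profile (simulation M G F d β j).long = M.profile (simulation M G F d β j).short :=
  long_simulation (M := M) β j ▸ (hM.pump_spec (length_short_simulation β j).ge _).2

theorem long_simulation_ne_nil (hM : M.PumpLength d) (hF : ∀ i, 0 < F i) :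
    (simulation M G F d β j).long ≠ [] :=
  List.ne_nil_of_length_pos ((hF _).trans_le (le_length_long_simulation β j hM))

theorem start_simulation : (simulation M G F d β j).start =
    blockStart (fun i => (simulation M G F d β i).long) j := by
  induction j with
  | zero => rfl
  | succ j ih => rw [blockStart_succ, ← ih, simulation, Stage.next]

theorem strictMono_start_simulation (hM : M.PumpLength d) (hF : ∀ i, 0 < F i) :
    StrictMono fun j => (simulation M G F d β j).start := by
  simp only [start_simulation]
  exact blockStart_strictMono fun j => long_simulation_ne_nil β j hM hF

theorem answer_simulation_spec (hM : M.PumpLength d) :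
    ((simulation M G F d β j).answer M β).length = d ∧
      M.summary (simulation M G F d β j).state
          ((simulation M G F d β j).short.zip ((simulation M G F d β j).answer M β)) =
        M.summary (simulation M G F d β j).state ((simulation M G F d β j).realBlock β) := by
  have hspec := M.pull_spec (simulation M G F d β j).state (profile_long_simulation β j hM)
    (y' := seg β (simulation M G F d β j).start
      ((simulation M G F d β j).start + (simulation M G F d β j).long.length))
    (by rw [length_seg, Nat.add_sub_cancel_left])
  rwa [length_short_simulation] at hspec

theorem answer_simulation_ne_nil (hM : M.PumpLength d) (hd : 0 < d) :
    (simulation M G F d β j).answer M β ≠ [] :=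
  List.ne_nil_of_length_pos (hd.trans_eq (answer_simulation_spec β j hM).1.symm)

theorem blockStart_answer_simulation (hM : M.PumpLength d) :
    blockStart (fun i => (simulation M G F d β i).answer M β) j = j * d := by
  simp [blockStart, (answer_simulation_spec β _ hM).1]

theorem answers_simulation (hM : M.PumpLength d) (hd : 0 < d) :
    (simulation M G F d β j).answers = seg (simulatedWord M G F d β) 0 (j * d) := by
  rw [simulatedWord, ← blockStart_answer_simulation β j hM,
    seg_zero_flatWord fun i => answer_simulation_ne_nil β i hM hd]
  induction j with
  | zero => rfl
  | succ j ih => simp [List.range_succ, ← ih, simulation, Stage.next]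

theorem short_simulation (hM : M.PumpLength d) (hd : 0 < d) (hG : Causal (· + 2 * d) G) :
    (simulation M G F d β j).short =
      seg (G (simulatedWord M G F d β)) (j * d) ((j + 1) * d) := by
  have seg_padWord (i : ℕ) {m n : ℕ} (hn : n ≤ i * d + 2 * d) :
      seg (G (padWord (seg (simulatedWord M G F d β) 0 (i * d)))) m n =
        seg (G (simulatedWord M G F d β)) m n :=
    seg_congr ((hG (padWord_seg_eqOn _ _)).mono fun _ hi => hi.2.trans_le hn)
  cases j with
  | zero =>
    rw [zero_mul, zero_add, one_mul, ← seg_padWord 0 (by omega), zero_mul]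
    rfl
  | succ j =>
    have hlength : (simulation M G F d β j).answers.length = j * d := by
      rw [answers_simulation β j hM hd, length_seg, Nat.sub_zero]
    rw [simulation, Stage.next]
    dsimp only
    rw [hlength, answers_simulation β j hM hd, seg_padWord j le_rfl]
    ring_nf

theorem realBlock_simulation [Inhabited I] (hM : M.PumpLength d) (hF : ∀ i, 0 < F i) :
    (simulation M G F d β j).realBlock β =
      seg (fun i => (realWord M G F d β i, β i)) (simulation M G F d β j).start
        (simulation M G F d β (j + 1)).start := by
  have hlong := seg_flatWord (fun i => long_simulation_ne_nil (M := M) (G := G) β i hM hF) j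
  rw [← start_simulation, ← start_simulation] at hlong
  rw [← zip_seg, realWord, hlong]
  rfl

theorem zip_answer_simulation (hM : M.PumpLength d) (hd : 0 < d) (hG : Causal (· + 2 * d) G) :
    (simulation M G F d β j).short.zip ((simulation M G F d β j).answer M β) =
      seg (fun i => (G (simulatedWord M G F d β) i, simulatedWord M G F d β i)) (j * d)
        ((j + 1) * d) := by
  have hanswer := seg_flatWord
    (fun i => answer_simulation_ne_nil (G := G) (F := F) β i hM hd) j
  rw [blockStart_answer_simulation β _ hM, blockStart_answer_simulation β _ hM] at hanswer
  rw [← zip_seg, ← short_simulation β j hM hd hG, simulatedWord, hanswer]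

theorem state_simulation_eq_stateAt_realWord [Inhabited I] (hM : M.PumpLength d)
    (hF : ∀ i, 0 < F i) :
    (simulation M G F d β j).state = M.stateAt M.qI (fun i => (realWord M G F d β i, β i))
      (simulation M G F d β j).start := by
  induction j with
  | zero => rfl
  | succ j ih =>
    rw [← state_segSummary ((strictMono_start_simulation β hM hF).monotone j.le_succ), segSummary,
      ← ih, ← realBlock_simulation β j hM hF]
    rfl

theorem state_simulation_eq_stateAt_simulatedWord (hM : M.PumpLength d) (hd : 0 < d)
    (hG : Causal (· + 2 * d) G) :
    (simulation M G F d β j).state = M.stateAt M.qI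
      (fun i => (G (simulatedWord M G F d β) i, simulatedWord M G F d β i)) (j * d) := by
  induction j with
  | zero =>
    rw [zero_mul]
    rfl
  | succ j ih =>
    rw [← state_segSummary (Nat.mul_le_mul_right d j.le_succ), segSummary, ← ih,
      ← zip_answer_simulation β j hM hd hG, (answer_simulation_spec β j hM).2]
    rfl

theorem segSummary_simulatedWord_eq_segSummary_realWord [Inhabited I] (hM : M.PumpLength d)
    (hd : 0 < d) (hG : Causal (· + 2 * d) G) (hF : ∀ i, 0 < F i) :
    M.segSummary M.qI (fun i => (G (simulatedWord M G F d β) i, simulatedWord M G F d β i))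
        (j * d) ((j + 1) * d) =
      M.segSummary M.qI (fun i => (realWord M G F d β i, β i)) (simulation M G F d β j).start
        (simulation M G F d β (j + 1)).start := by
  rw [segSummary, segSummary, ← state_simulation_eq_stateAt_simulatedWord β j hM hd hG,
    ← zip_answer_simulation β j hM hd hG, ← state_simulation_eq_stateAt_realWord β j hM hF,
    ← realBlock_simulation β j hM hF, (answer_simulation_spec β j hM).2]

theorem simulatedWord_mem_Lang [Inhabited I] (hM : M.PumpLength d) (hd : 0 < d)
    (hG : Causal (· + 2 * d) G) (hF : ∀ i, 0 < F i)
    (h : (fun i => (realWord M G F d β i, β i)) ∈ M.Lang) :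
    (fun i => (G (simulatedWord M G F d β) i, simulatedWord M G F d β i)) ∈ M.Lang :=
  accepting_of_segSummary_eq (zero_mul d) rfl (strictMono_mul_right_of_pos hd)
    (strictMono_start_simulation β hM hF) (d := d) (fun j => by rw [← Nat.sub_mul]; simp)
    (fun j => segSummary_simulatedWord_eq_segSummary_realWord β j hM hd hG hF) h

theorem simulation_congr {β β' : ℕ → O}
    (h : Set.EqOn β β' (Set.Iio (simulation M G F d β j).start)) :
    simulation M G F d β j = simulation M G F d β' j := by
  induction j with
  | zero => rfl
  | succ j ih =>
    have hstage := ih (h.mono (Set.Iio_subset_Iio (Nat.le_add_right _ _)))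
    have hblock : (simulation M G F d β j).realBlock β = (simulation M G F d β j).realBlock β' :=
      congrArg (List.zip _) (seg_congr (h.mono Set.Ico_subset_Iio_self))
    rw [simulation, simulation, ← hstage, Stage.next, Stage.next, Stage.answer, Stage.answer,
      hblock]

theorem long_simulation_succ_congr {β β' : ℕ → O}
    (h : Set.EqOn β β' (Set.Iio (simulation M G F d β j).start)) :
    (simulation M G F d β (j + 1)).long = (simulation M G F d β' (j + 1)).long := by
  rw [simulation, simulation, ← simulation_congr j h]
  rfl

theorem causal_realWord [Inhabited I] (hM : M.PumpLength d) (hF : ∀ i, 0 < F i)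
    (hF' : Monotone F) : Causal F (realWord M G F d) := by
  intro β β' i hβ
  have hN := strictMono_start_simulation (G := G) β hM hF
  obtain ⟨j, hji, hij⟩ := exists_mem_Ico_succ rfl hN i
  have hβ' {l : ℕ} (hl : l ≤ j) : Set.EqOn β β' (Set.Iio (simulation M G F d β l).start) :=
    hβ.mono (Set.Iio_subset_Iio ((hN.monotone hl).trans hji))
  have hlong : ∀ l < j + 2,
      (simulation M G F d β l).long = (simulation M G F d β' l).long
    | 0, _ => rfl
    | l + 1, hl => long_simulation_succ_congr l (hβ' (by omega))
  have hstart : F i ≤ (simulation M G F d β (j + 2)).start :=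
    (hF' hij.le).trans ((le_length_long_simulation β (j + 1) hM).trans (Nat.le_add_left _ _))
  refine (flatWord_eqOn (fun l => long_simulation_ne_nil β l hM hF)
    (fun l => long_simulation_ne_nil β' l hM hF) hlong).mono ?_
  rw [← start_simulation]
  exact Set.Iio_subset_Iio hstart

theorem iWins_of_pumpLength [Inhabited I] (hM : M.PumpLength d) (hd : 0 < d)
    (hG : Causal (· + 2 * d) G) (hL : ∀ γ, (fun i => (G γ i, γ i)) ∉ M.Lang) {f : ℕ → ℕ}
    (hf : DelayFn f) : IWins f M.Lang := by
  have hF (i : ℕ) : 0 < lookahead f i :=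
    (hf 0).trans_le ((Nat.le_add_right _ i).trans (add_le_lookahead hf i))
  exact (causal_realWord hM hF (lookahead_monotone f)).iWins hf fun β h =>
    hL _ (simulatedWord_mem_Lang β hM hd hG hF h)

end Simulation

end PACost

theorem statement4_general {Q I O : Type} [Fintype Q] [Inhabited I] (M : PACost Q (I × O))
    {g : ℕ → ℕ} (hg : DelayFn g)
    (hg0 : 2 ^ (2 * Fintype.card Q ^ 2 * ((Finset.univ.image M.Ω).card + 1) ^ 2 + 1) ≤ g 0) :
    IWins g M.Lang ↔ ∀ f : ℕ → ℕ, DelayFn f → IWins f M.Lang := by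
  refine ⟨fun h f hf => ?_, fun h => h g hg⟩
  rcases isEmpty_or_nonempty O with hO | ⟨⟨o⟩⟩
  · exact iWins_of_isEmpty f M.Lang
  · have : Inhabited O := ⟨o⟩
    obtain ⟨G, hG, hL⟩ := h.exists_causal hg
    rw [pow_succ'] at hg0
    exact PACost.iWins_of_pumpLength (M.pumpLength_of_le le_rfl) (by positivity)
      (hG.mono fun i => (Nat.add_comm _ _).trans_le
        ((Nat.add_le_add_right hg0 i).trans (add_le_lookahead hg i))) hL hf

theorem two_mul_sq_mul_succ_sq_le {n k : ℕ} (hn : 2 ≤ n) (hk : 1 ≤ k) :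
    2 * n ^ 2 * (k + 1) ^ 2 ≤ 2 * n ^ 4 * k ^ 2 :=
  calc 2 * n ^ 2 * (k + 1) ^ 2 ≤ 2 * n ^ 2 * (n * k) ^ 2 := by
        gcongr
        nlinarith
    _ = 2 * n ^ 4 * k ^ 2 := by ring

theorem PACost.two_mul_sq_card_mul_le_of_even_of_odd {Q A : Type} [Fintype Q] {M : PACost Q A}
    (he : ∃ q, Even (M.Ω q)) (ho : ∃ q, Odd (M.Ω q)) :
    2 * Fintype.card Q ^ 2 * ((Finset.univ.image M.Ω).card + 1) ^ 2 ≤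
      2 * Fintype.card Q ^ 4 * (Finset.univ.image M.Ω).card ^ 2 := by
  obtain ⟨q, hq⟩ := he
  obtain ⟨r, hr⟩ := ho
  have hne : q ≠ r := by
    rintro rfl
    exact Nat.not_even_iff_odd.2 hr hq
  exact two_mul_sq_mul_succ_sq_le (Fintype.one_lt_card_iff.2 ⟨q, r, hne⟩)
    (Finset.card_pos.2 ⟨_, Finset.mem_image_of_mem M.Ω (Finset.mem_univ q)⟩)

/-- Theorem 1, constant lookahead suffices. For a parity automaton with
costs with `n` states and `k` colors (both parities occurring among the colors), Player I
wins the delay game with the constant delay function with `f 0 = 2^(2n⁴k²+1)` iff he wins it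
for every delay function. -/
theorem statement4 {Q I O : Type} [Fintype Q] [Fintype I] [Fintype O] [Inhabited I]
    (M : PACost Q (I × O)) (n k : ℕ)
    (hn : Fintype.card Q = n) (hk : (Finset.univ.image M.Ω).card = k)
    (he : ∃ q, Even (M.Ω q)) (ho : ∃ q, Odd (M.Ω q)) :
    IWins (fun i => if i = 0 then 2 ^ (2 * n ^ 4 * k ^ 2 + 1) else 1) M.Lang ↔
      ∀ f : ℕ → ℕ, DelayFn f → IWins f M.Lang := by
  subst hn hk
  exact statement4_general M (fun i => by split_ifs <;> positivity) (Nat.pow_le_pow_right two_pos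
    (Nat.succ_le_succ (PACost.two_mul_sq_card_mul_le_of_even_of_odd he ho)))
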